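/- arXiv:1006.3542 — 2 statements merged into one kernel-verified Lean document; each statement's English description precedes it below -/
import Mathlib

section
/- Suppose f is differentiable on an open set U ⊆ (0,∞), and let P = (p₁,…,p_m) ∈ (ℝ²)^m be such that for every b ∈ B the index i(b) minimizing ‖b − p_i‖ is unique, p_{i(b)} ≠ b, and ‖b − p_{i(b)}‖ ∈ U. Then for every h ∈ {1,…,m} and every unit vector w ∈ ℝ² (the direction of a network edge), the map t ↦ H(p₁,…,p_{h−1}, p_h + t·w, p_{h+1},…,p_m) is differentiable at t = 0, with derivative equal to the inner product ⟨Σ_{b : i(b)=h} φ_b f′(‖b − p_h‖)(p_h − b)/‖b − p_h‖ , w⟩. -/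
open scoped RealInnerProductSpace

/-!
STATEMENT 2: Under the same hypotheses as Statement 1, for every sensor index `h`
and every unit vector `w` (the direction of a network edge), the map
`t ↦ H(p₁,…,p_h + t·w,…,p_m)` is differentiable at `t = 0` with derivative
`⟨Σ_{b : ι b = h} φ_b f′(‖b − p_h‖)(p_h − b)/‖b − p_h‖ , w⟩`.
-/

noncomputable abbrev E2 : Type := EuclideanSpace ℝ (Fin 2)

/-!
Since the nearest sensor to each `b ∈ B` is strictly nearer than the others, it remains so under
small perturbations of `P`. Near `P` the distance `dist(b, P)` is therefore `‖b - p_{ι b}‖`,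
which is smooth because `p_{ι b} ≠ b`, so `H` is Fréchet differentiable at `P`. The directional
derivative is its derivative along the line `t ↦ (p₁, …, p_h + t w, …, p_m)`, whose velocity
vanishes outside the `h`-th component: only the `b` with `ι b = h` contribute.
-/

open Filter Topology

theorem lt_of_forall_le_of_unique {κ α : Type*} [LinearOrder α] {g : κ → α} {i j : κ}
    (hmin : ∀ k, g i ≤ g k) (huniq : ∀ l, (∀ k, g l ≤ g k) → l = i) (hj : j ≠ i) : g i < g j :=
  lt_of_not_ge fun hji => hj (huniq j fun k => hji.trans (hmin k))

theorem iInf_eventuallyEq_of_forall_lt {X κ α : Type*} [TopologicalSpace X] [Finite κ]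
    [ConditionallyCompleteLinearOrder α] [TopologicalSpace α] [OrderClosedTopology α]
    {g : κ → X → α} {x : X} {i : κ} (hg : ∀ j, ContinuousAt (g j) x)
    (hlt : ∀ j ≠ i, g i x < g j x) : (fun y => ⨅ j, g j y) =ᶠ[𝓝 x] g i := by
  have : Nonempty κ := ⟨i⟩
  have hle : ∀ᶠ y in 𝓝 x, ∀ j, g i y ≤ g j y := by
    refine eventually_all.2 fun j => ?_
    rcases eq_or_ne j i with rfl | hj
    · exact .of_forall fun _ => le_rfl
    · exact ((hg i).eventually_lt (hg j) (hlt j hj)).mono fun _ => le_of_lt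
  filter_upwards [hle] with y hy
  exact le_antisymm (ciInf_le (Set.finite_range _).bddBelow i) (le_ciInf hy)

theorem hasDerivAt_update_add_smul {𝕜 κ : Type*} [NontriviallyNormedField 𝕜] [Finite κ]
    [DecidableEq κ] {F : κ → Type*} [∀ i, NormedAddCommGroup (F i)] [∀ i, NormedSpace 𝕜 (F i)]
    (P : ∀ i, F i) (h : κ) (w : F h) (t : 𝕜) :
    HasDerivAt (fun s : 𝕜 => Function.update P h (P h + s • w)) (Pi.single h w) t := by
  have hline : HasDerivAt (fun s : 𝕜 => P h + s • w) w t := by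
    simpa using ((hasDerivAt_id t).smul_const w).const_add (P h)
  have := Fintype.ofFinite κ
  refine hasDerivAt_pi.2 fun i => ?_
  rcases eq_or_ne i h with rfl | hi
  · simpa using hline
  · simpa [hi] using hasDerivAt_const t (P i)

section Multicenter

variable {E κ : Type*} [NormedAddCommGroup E]

/-- The distance `dist(b, P)` from `b` to the nearest of the sensors `P`. It is an infimum of
reals, hence `0` when there are no sensors. -/
noncomputable def nearestDist (P : κ → E) (b : E) : ℝ :=
  ⨅ i, ‖b - P i‖

/-- The multi-center function `H(P)` of the barycenters `B` with weights `φ` and performance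
function `f`. -/
noncomputable def multicenter (B : Finset E) (φ : E → ℝ) (f : ℝ → ℝ) (P : κ → E) : ℝ :=
  ∑ b ∈ B, f (nearestDist P b) * φ b

theorem nearestDist_eventuallyEq [Finite κ] {P : κ → E} {b : E} {i : κ}
    (hlt : ∀ j ≠ i, ‖b - P i‖ < ‖b - P j‖) :
    (fun Q : κ → E => nearestDist Q b) =ᶠ[𝓝 P] fun Q => ‖b - Q i‖ :=
  iInf_eventuallyEq_of_forall_lt (g := fun j (Q : κ → E) => ‖b - Q j‖)
    (fun j => (continuous_const.sub (continuous_apply j)).norm.continuousAt) hlt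

variable [InnerProductSpace ℝ E]

theorem hasFDerivAt_norm_of_ne_zero {x : E} (hx : x ≠ 0) :
    HasFDerivAt (fun y : E => ‖y‖) (‖x‖⁻¹ • innerSL ℝ x) x := by
  have hsqrt := (hasStrictFDerivAt_norm_sq x).hasFDerivAt.sqrt (by simpa using hx)
  simp only [Real.sqrt_sq (norm_nonneg _)] at hsqrt
  refine hsqrt.congr_fderiv ?_
  ext v
  simp only [one_div, mul_inv_rev, smul_apply, coe_innerSL_apply, nsmul_eq_mul, Nat.cast_ofNat,
    smul_eq_mul]
  field_simp

variable [Finite κ] {P : κ → E}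

theorem hasFDerivAt_nearestDist {b : E} {i : κ}
    (hlt : ∀ j ≠ i, ‖b - P i‖ < ‖b - P j‖) (hne : P i ≠ b) :
    HasFDerivAt (fun Q : κ → E => nearestDist Q b)
      (‖b - P i‖⁻¹ • (innerSL ℝ (P i - b)).comp (ContinuousLinearMap.proj i)) P := by
  have := Fintype.ofFinite κ
  have hsub : HasFDerivAt (fun Q : κ → E => Q i - b) (ContinuousLinearMap.proj (R := ℝ) i) P :=
    (hasFDerivAt_apply i P).sub_const b
  have hnorm := (hasFDerivAt_norm_of_ne_zero (sub_ne_zero.2 hne)).comp P hsub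
  refine HasFDerivAt.congr_of_eventuallyEq ?_ (nearestDist_eventuallyEq hlt)
  simpa only [Function.comp_def, norm_sub_rev, ContinuousLinearMap.smul_comp] using hnorm

variable {B : Finset E} {φ : E → ℝ} {f : ℝ → ℝ} {ι : E → κ}

theorem hasFDerivAt_multicenter
    (hlt : ∀ b ∈ B, ∀ j ≠ ι b, ‖b - P (ι b)‖ < ‖b - P j‖)
    (hne : ∀ b ∈ B, P (ι b) ≠ b)
    (hf : ∀ b ∈ B, DifferentiableAt ℝ f ‖b - P (ι b)‖) :
    HasFDerivAt (multicenter B φ f)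
      (∑ b ∈ B, (φ b * deriv f ‖b - P (ι b)‖ / ‖b - P (ι b)‖) •
        (innerSL ℝ (P (ι b) - b)).comp (ContinuousLinearMap.proj (ι b))) P := by
  have := Fintype.ofFinite κ
  refine HasFDerivAt.fun_sum fun b hb => ?_
  have hdist : nearestDist P b = ‖b - P (ι b)‖ :=
    (nearestDist_eventuallyEq (hlt b hb)).eq_of_nhds
  have hfb : HasDerivAt f (deriv f ‖b - P (ι b)‖) (nearestDist P b) :=
    hdist ▸ (hf b hb).hasDerivAt
  have hterm := (hfb.comp_hasFDerivAt P
    (hasFDerivAt_nearestDist (hlt b hb) (hne b hb))).mul_const (φ b)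
  refine hterm.congr_fderiv ?_
  simp only [smul_smul, div_eq_mul_inv, mul_assoc]

theorem multicenter_collapsed_directional_derivative_general [DecidableEq κ]
    (hlt : ∀ b ∈ B, ∀ j ≠ ι b, ‖b - P (ι b)‖ < ‖b - P j‖)
    (hne : ∀ b ∈ B, P (ι b) ≠ b)
    (hf : ∀ b ∈ B, DifferentiableAt ℝ f ‖b - P (ι b)‖) (h : κ) (w : E) :
    HasDerivAt (fun t : ℝ => multicenter B φ f (Function.update P h (P h + t • w)))
      ⟪∑ b ∈ B.filter (fun b => ι b = h),
          (φ b * deriv f ‖b - P h‖ / ‖b - P h‖) • (P h - b), w⟫ 0 := by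
  have := Fintype.ofFinite κ
  have hderiv := (hasFDerivAt_multicenter (φ := φ) hlt hne hf).comp_hasDerivAt_of_eq 0
    (hasDerivAt_update_add_smul P h w (0 : ℝ)) (by simp)
  refine hderiv.congr_deriv ?_
  rw [sum_inner, Finset.sum_filter, sum_apply]
  refine Finset.sum_congr rfl fun b _ => ?_
  split_ifs with hb
  · subst hb
    simp [real_inner_smul_left, inner_sub_left]
  · simp [Pi.single_eq_of_ne hb]

end Multicenter

theorem multicenter_collapsed_directional_derivative
    (B : Finset E2) (hB : B.Nonempty)
    (φ : E2 → ℝ) (hφ : ∀ b ∈ B, 0 ≤ φ b)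
    (f : ℝ → ℝ) (U : Set ℝ) (hUopen : IsOpen U) (hUpos : U ⊆ Set.Ioi 0)
    (hf : DifferentiableOn ℝ f U)
    (m : ℕ) (hm : 0 < m) (P : Fin m → E2)
    (ι : E2 → Fin m)
    (hmin : ∀ b ∈ B, ∀ j, ‖b - P (ι b)‖ ≤ ‖b - P j‖)
    (huniq : ∀ b ∈ B, ∀ j, (∀ k, ‖b - P j‖ ≤ ‖b - P k‖) → j = ι b)
    (hne : ∀ b ∈ B, P (ι b) ≠ b)
    (hU : ∀ b ∈ B, ‖b - P (ι b)‖ ∈ U) :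
    ∀ h : Fin m, ∀ w : E2, ‖w‖ = 1 →
      HasDerivAt
        (fun t : ℝ =>
          ∑ b ∈ B, f (⨅ i, ‖b - Function.update P h (P h + t • w) i‖) * φ b)
        ⟪∑ b ∈ B.filter (fun b => ι b = h),
            (φ b * deriv f ‖b - P h‖ / ‖b - P h‖) • (P h - b), w⟫
        0 :=
  fun h w _ => multicenter_collapsed_directional_derivative_general
    (fun b hb _ => lt_of_forall_le_of_unique (hmin b hb) (huniq b hb)) hne
    (fun b hb => hf.differentiableAt (hUopen.mem_nhds (hU b hb))) h w
end

section
/- Assume f is nonincreasing, continuously differentiable on (0,∞) with locally Lipschitz derivative (locally bounded second derivatives), all weights φ_b are nonnegative, and p_i ≠ b for all i ∈ {1,…,m}, b ∈ B. Let G = ∇_l H(P) be the lexicographic gradient at P. Then there exists δ̄ > 0 such that for all step sizes δ ∈ (0, δ̄] the gradient-ascent step does not decrease the multi-center function: H(P + δ·G) ≥ H(P); moreover, if G ≠ 0 the inequality is strict: H(P + δ·G) > H(P). -/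
/-!
Let each barycenter `b` keep the sensor `ι b` allocated to it at `P`. The resulting function of the
positions agrees with `H` at `P` and, since `f` is nonincreasing, lies below `H` everywhere. Unlike
`H` it is differentiable at `P`; its gradient there is the lexicographic gradient `G`, so along the
ray `P + δ • G` it has initial slope `‖G‖²` and increases strictly for small `δ` unless `G = 0`.
-/

open Filter Topology

section Calculus

theorem eventually_nhdsGT_lt_of_hasDerivWithinAt_pos {g : ℝ → ℝ} {g' x : ℝ}
    (hg : HasDerivWithinAt g g' (Set.Ioi x) x) (hg' : 0 < g') :
    ∀ᶠ y in 𝓝[>] x, g x < g y := by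
  have slope_tendsto : Tendsto (slope g x) (𝓝[>] x) (𝓝 g') :=
    (hasDerivWithinAt_iff_tendsto_slope' Set.self_notMem_Ioi).mp hg
  filter_upwards [slope_tendsto.eventually_const_lt hg', self_mem_nhdsWithin] with y slope_pos hxy
  exact (slope_pos_iff_of_le (le_of_lt hxy)).mp slope_pos

variable {E : Type*} [NormedAddCommGroup E] [InnerProductSpace ℝ E]

theorem hasDerivAt_norm_of_ne_zero {c : ℝ → E} {c' : E} {t : ℝ} (hc : HasDerivAt c c' t)
    (ht : c t ≠ 0) : HasDerivAt (fun s => ‖c s‖) (inner ℝ (c t) c' / ‖c t‖) t := by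
  have sqrt_deriv := hc.norm_sq.sqrt (pow_ne_zero 2 (norm_ne_zero_iff.mpr ht))
  simp only [Real.sqrt_sq (norm_nonneg _)] at sqrt_deriv
  rwa [mul_div_mul_left _ _ two_ne_zero] at sqrt_deriv

theorem hasDerivAt_comp_norm_sub_add_smul {f : ℝ → ℝ} {b p : E} (v : E) (hpb : p ≠ b)
    (hf : DifferentiableAt ℝ f ‖b - p‖) :
    HasDerivAt (fun t : ℝ => f ‖b - (p + t • v)‖)
      (inner ℝ ((deriv f ‖b - p‖ / ‖b - p‖) • (p - b)) v) 0 := by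
  have line : HasDerivAt (fun t : ℝ => p + t • v - b) v 0 := by
    simpa using (((hasDerivAt_id (0 : ℝ)).smul_const v).const_add p).sub_const b
  have dist_deriv : HasDerivAt (fun t : ℝ => ‖b - (p + t • v)‖)
      (inner ℝ (p - b) v / ‖b - p‖) 0 := by
    simpa [norm_sub_rev b] using
      hasDerivAt_norm_of_ne_zero line (by simpa using sub_ne_zero.mpr hpb)
  have outer : HasDerivAt f (deriv f ‖b - p‖) ‖b - (p + (0 : ℝ) • v)‖ := by
    simpa using hf.hasDerivAt
  rw [real_inner_smul_left, div_mul_eq_mul_div, mul_div_assoc]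
  exact outer.comp (0 : ℝ) dist_deriv

end Calculus

section MultiCenter

variable {E κ : Type*} [NormedAddCommGroup E]

/-- The multi-center function `H(P)` of sensors at positions `P`, for barycenters `B` with weights
`φ` and performance function `f`. The infimum is the distance from `b` to the nearest sensor
(it is `0` when there are no sensors). -/
noncomputable def multiCenter (B : Finset E) (φ : E → ℝ) (f : ℝ → ℝ) (P : κ → E) : ℝ :=
  ∑ b ∈ B, φ b * f (⨅ i, ‖b - P i‖)

/-- The performance at positions `P` when every barycenter `b` is served by the fixed sensor `ι b`,
nearest or not. It serves as a differentiable lower bound for `multiCenter`. -/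
noncomputable def allocatedMultiCenter (B : Finset E) (φ : E → ℝ) (f : ℝ → ℝ) (ι : E → κ)
    (P : κ → E) : ℝ :=
  ∑ b ∈ B, φ b * f ‖b - P (ι b)‖

/-- The allocation `ι` sends every barycenter to a nearest sensor. Ties may be broken arbitrarily;
the lexicographic allocation breaks them by least index. -/
def IsNearestAllocation (B : Finset E) (P : κ → E) (ι : E → κ) : Prop :=
  ∀ b ∈ B, ∀ j, ‖b - P (ι b)‖ ≤ ‖b - P j‖

theorem bddBelow_range_norm_sub (b : E) (P : κ → E) : BddBelow (Set.range fun i => ‖b - P i‖) :=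
  ⟨0, Set.forall_mem_range.mpr fun _ => norm_nonneg _⟩

theorem allocatedMultiCenter_le_multiCenter {B : Finset E} {φ : E → ℝ} {f : ℝ → ℝ}
    (hφ : ∀ b ∈ B, 0 ≤ φ b) (hf : AntitoneOn f (Set.Ici 0)) (ι : E → κ) (P : κ → E) :
    allocatedMultiCenter B φ f ι P ≤ multiCenter B φ f P :=
  Finset.sum_le_sum fun b hb => mul_le_mul_of_nonneg_left
    (hf (Real.iInf_nonneg fun _ => norm_nonneg _) (norm_nonneg _)
      (ciInf_le (bddBelow_range_norm_sub b P) (ι b)))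
    (hφ b hb)

theorem IsNearestAllocation.multiCenter_eq {B : Finset E} {P : κ → E} {ι : E → κ}
    (hι : IsNearestAllocation B P ι) (φ : E → ℝ) (f : ℝ → ℝ) :
    multiCenter B φ f P = allocatedMultiCenter B φ f ι P := by
  refine Finset.sum_congr rfl fun b hb => ?_
  have : Nonempty κ := ⟨ι b⟩
  have nearest_dist : ⨅ i, ‖b - P i‖ = ‖b - P (ι b)‖ :=
    le_antisymm (ciInf_le (bddBelow_range_norm_sub b P) _) (le_ciInf (hι b hb))
  rw [nearest_dist]

end MultiCenter

section Gradient

variable {E κ : Type*} [NormedAddCommGroup E] [InnerProductSpace ℝ E] [DecidableEq κ]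
  {B : Finset E} {φ : E → ℝ} {f : ℝ → ℝ} {P : κ → E} {ι : E → κ}

/-- The gradient at `P` of `allocatedMultiCenter B φ f ι`, as a family of vectors indexed by the
sensors; for the lexicographic allocation `ι` it is the lexicographic gradient. A barycenter lying
on its sensor contributes `0`, the norm not being differentiable there. -/
noncomputable def allocationGradient (B : Finset E) (φ : E → ℝ) (f : ℝ → ℝ) (ι : E → κ)
    (P : κ → E) : κ → E := fun h =>
  ∑ b ∈ B.filter (fun b => ι b = h), (φ b * deriv f ‖b - P h‖ / ‖b - P h‖) • (P h - b)

theorem allocationGradient_eq_zero_of_notMem_image {h : κ} (hh : h ∉ B.image ι) :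
    allocationGradient B φ f ι P h = 0 := by
  have cell_empty : B.filter (fun b => ι b = h) = ∅ :=
    Finset.filter_eq_empty_iff.mpr fun b hb hbh => hh (Finset.mem_image.mpr ⟨b, hb, hbh⟩)
  rw [allocationGradient, cell_empty, Finset.sum_empty]

theorem sum_inner_allocationGradient (V : κ → E) :
    ∑ h ∈ B.image ι, inner ℝ (allocationGradient B φ f ι P h) (V h) =
      ∑ b ∈ B, φ b * inner ℝ
        ((deriv f ‖b - P (ι b)‖ / ‖b - P (ι b)‖) • (P (ι b) - b)) (V (ι b)) := by
  rw [← Finset.sum_fiberwise_of_maps_to fun _ => Finset.mem_image_of_mem ι]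
  refine Finset.sum_congr rfl fun h _ => ?_
  rw [allocationGradient, sum_inner]
  refine Finset.sum_congr rfl fun b hb => ?_
  obtain rfl : ι b = h := (Finset.mem_filter.mp hb).2
  rw [← real_inner_smul_left, smul_smul, mul_div_assoc]

theorem hasDerivAt_allocatedMultiCenter (hP : ∀ b ∈ B, P (ι b) ≠ b)
    (hf : ∀ b ∈ B, DifferentiableAt ℝ f ‖b - P (ι b)‖) (V : κ → E) :
    HasDerivAt (fun t : ℝ => allocatedMultiCenter B φ f ι (P + t • V))
      (∑ h ∈ B.image ι, inner ℝ (allocationGradient B φ f ι P h) (V h)) 0 := by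
  rw [sum_inner_allocationGradient]
  exact HasDerivAt.fun_sum fun b hb =>
    (hasDerivAt_comp_norm_sub_add_smul (V (ι b)) (hP b hb) (hf b hb)).const_mul (φ b)

theorem sum_inner_allocationGradient_self_pos (hG : allocationGradient B φ f ι P ≠ 0) :
    0 < ∑ h ∈ B.image ι,
      inner ℝ (allocationGradient B φ f ι P h) (allocationGradient B φ f ι P h) := by
  obtain ⟨h, hh⟩ := Function.ne_iff.mp hG
  exact Finset.sum_pos' (fun _ _ => real_inner_self_nonneg)
    ⟨h, not_imp_comm.mp allocationGradient_eq_zero_of_notMem_image hh, real_inner_self_pos.mpr hh⟩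

theorem eventually_multiCenter_lt_add_smul_allocationGradient (hφ : ∀ b ∈ B, 0 ≤ φ b)
    (hanti : AntitoneOn f (Set.Ici 0)) (hι : IsNearestAllocation B P ι)
    (hP : ∀ b ∈ B, P (ι b) ≠ b) (hf : ∀ b ∈ B, DifferentiableAt ℝ f ‖b - P (ι b)‖)
    (hG : allocationGradient B φ f ι P ≠ 0) :
    ∀ᶠ δ : ℝ in 𝓝[>] 0,
      multiCenter B φ f P < multiCenter B φ f (P + δ • allocationGradient B φ f ι P) := by
  have ascent := eventually_nhdsGT_lt_of_hasDerivWithinAt_pos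
    (hasDerivAt_allocatedMultiCenter (φ := φ) hP hf _).hasDerivWithinAt
    (sum_inner_allocationGradient_self_pos hG)
  filter_upwards [ascent] with δ hδ
  calc multiCenter B φ f P
      = allocatedMultiCenter B φ f ι P := hι.multiCenter_eq φ f
    _ < allocatedMultiCenter B φ f ι (P + δ • allocationGradient B φ f ι P) := by
      simpa only [zero_smul, add_zero] using hδ
    _ ≤ multiCenter B φ f (P + δ • allocationGradient B φ f ι P) :=
      allocatedMultiCenter_le_multiCenter hφ hanti ι _

theorem lex_gradient_ascent_step_general (hφ : ∀ b ∈ B, 0 ≤ φ b)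
    (hanti : AntitoneOn f (Set.Ici 0)) (hι : IsNearestAllocation B P ι)
    (hP : ∀ b ∈ B, P (ι b) ≠ b) (hf : ∀ b ∈ B, DifferentiableAt ℝ f ‖b - P (ι b)‖) :
    ∃ δbar > (0 : ℝ), ∀ δ : ℝ, 0 < δ → δ ≤ δbar →
      multiCenter B φ f P ≤ multiCenter B φ f (P + δ • allocationGradient B φ f ι P) ∧
      (allocationGradient B φ f ι P ≠ 0 →
        multiCenter B φ f P < multiCenter B φ f (P + δ • allocationGradient B φ f ι P)) := by
  by_cases hG : allocationGradient B φ f ι P = 0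
  · exact ⟨1, one_pos, fun δ _ _ => by simp [hG]⟩
  · obtain ⟨δbar, δbar_pos, ascent⟩ := mem_nhdsGT_iff_exists_Ioc_subset.mp
      (eventually_multiCenter_lt_add_smul_allocationGradient hφ hanti hι hP hf hG)
    refine ⟨δbar, δbar_pos, fun δ δ_pos δ_le => ?_⟩
    have increase := ascent ⟨δ_pos, δ_le⟩
    exact ⟨le_of_lt increase, fun _ => increase⟩

end Gradient

theorem lex_gradient_ascent_step
    (B : Finset E2) (hB : B.Nonempty)
    (φ : E2 → ℝ) (hφ : ∀ b ∈ B, 0 ≤ φ b)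
    (f : ℝ → ℝ)
    (hmono : ∀ x y : ℝ, 0 ≤ x → x ≤ y → f y ≤ f x)
    (hf : ContDiffOn ℝ 1 f (Set.Ioi 0))
    (hf' : ∀ x ∈ Set.Ioi (0 : ℝ), ∃ s ∈ nhds x, ∃ K : NNReal,
      LipschitzOnWith K (deriv f) s)
    (m : ℕ) (hm : 0 < m) (P : Fin m → E2)
    (hp : ∀ i, ∀ b ∈ B, P i ≠ b)
    (ι : E2 → Fin m)
    (hmin : ∀ b ∈ B, ∀ j, ‖b - P (ι b)‖ ≤ ‖b - P j‖)
    (hleast : ∀ b ∈ B, ∀ j, (∀ k, ‖b - P j‖ ≤ ‖b - P k‖) → ι b ≤ j)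
    (G : Fin m → E2)
    (hG : ∀ h, G h = ∑ b ∈ B.filter (fun b => ι b = h),
        (φ b * deriv f ‖b - P h‖ / ‖b - P h‖) • (P h - b)) :
    ∃ δbar > (0 : ℝ), ∀ δ : ℝ, 0 < δ → δ ≤ δbar →
      (∑ b ∈ B, φ b * f (⨅ i, ‖b - (P i + δ • G i)‖) ≥
        ∑ b ∈ B, φ b * f (⨅ i, ‖b - P i‖)) ∧
      (G ≠ 0 →
        ∑ b ∈ B, φ b * f (⨅ i, ‖b - (P i + δ • G i)‖) >
          ∑ b ∈ B, φ b * f (⨅ i, ‖b - P i‖)) := by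
  obtain rfl : G = allocationGradient B φ f ι P := funext hG
  refine lex_gradient_ascent_step_general hφ (fun x hx y _ hxy => hmono x y hx hxy) hmin
    (fun b hb => hp (ι b) b hb) fun b hb => ?_
  have dist_pos : 0 < ‖b - P (ι b)‖ := norm_pos_iff.mpr (sub_ne_zero.mpr (hp (ι b) b hb).symm)
  exact (hf.contDiffAt (Ioi_mem_nhds dist_pos)).differentiableAt one_ne_zero
end
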